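/- Let ν > 0 and let h : [0,∞) × ℝ → ℝ be smooth, 2π-periodic in x, even in x (h(t,−x) = h(t,x)), with ∫_{−π}^{π} h(0,x) dx = 0, and a classical solution of ∂_t h = ∂_x((∂_x h)³ − ∂_x h) − ν ∂_x⁴ h on [0,∞) × ℝ. Then limsup_{t → ∞} sup_{x ∈ ℝ} |∂_x h(t,x)| ≤ 1. -/

import Mathlib

open Real MeasureTheory Set Filter

noncomputable section

/-!
Write `u = ∂ₓ h` and `μ = u³ - u - ν u''`, so that the equation reads `∂ₜ h = ∂ₓ μ`.

The slope exceeds `1` only if `μ` varies: the quantity `ν u'² / 2 - (u² - 1)² / 4 + μ (u - min u)`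
has derivative `μ' (u - min u)`, and comparing its values at a maximum and at a minimum point of `u`
gives `u² ≤ 1 + ∫ |μ'| = 1 + ∫ |∂ₜ h|`, since `u` has a zero by periodicity of `h`.

It remains to see that `∫ |∂ₜ h| → 0`. The equation is the `L²` gradient flow of the energy
`E = ∫ ν u'² / 2 + (u² - 1)² / 4`, so `E' = -D` with `D = ∫ (∂ₜ h)²`, and the lower bound `-1` on
the derivative `3 u² - 1` of `u³ - u` gives `D' ≤ D / (2 ν)`. As `E ≥ 0`, this forces `D → 0`.
-/

open scoped ContDiff Topology

section Calculus

lemma deriv_deriv_nonpos_of_isLocalMax {f : ℝ → ℝ} {x : ℝ} (hmax : IsLocalMax f x)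
    (hf : ContinuousAt f x) : deriv (deriv f) x ≤ 0 := by
  by_contra! hpos
  have hmin : IsLocalMin f x := isLocalMin_of_deriv_deriv_pos hpos hmax.deriv_eq_zero hf
  have hconst : f =ᶠ[𝓝 x] fun _ => f x := by
    filter_upwards [hmax, hmin] with y hle hge using le_antisymm hle hge
  have hzero : deriv (deriv f) x = 0 := by simpa using hconst.deriv.deriv_eq
  exact hpos.ne' hzero

lemma periodic_deriv {f : ℝ → ℝ} {L : ℝ} (hf : Function.Periodic f L) :
    Function.Periodic (deriv f) L := fun x => by
  rw [← deriv_comp_add_const, funext hf]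

lemma exists_forall_le_of_periodic {f : ℝ → ℝ} {L : ℝ} (hper : Function.Periodic f L)
    (hL : L ≠ 0) (hf : Continuous f) : ∃ x, ∀ y, f y ≤ f x := by
  obtain ⟨_, ⟨x, rfl⟩, hx⟩ :=
    (hper.compact_of_continuous hL hf).exists_isGreatest (range_nonempty f)
  exact ⟨x, fun y => hx (mem_range_self y)⟩

lemma exists_deriv_eq_zero_of_periodic {f : ℝ → ℝ} {L : ℝ} (hper : Function.Periodic f L)
    (hL : 0 < L) (hf : Continuous f) : ∃ x, deriv f x = 0 :=
  let ⟨x, _, hx⟩ := exists_deriv_eq_zero hL hf.continuousOn hper.eq.symm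
  ⟨x, hx⟩

lemma sq_integral_abs_le {f : ℝ → ℝ} {L : ℝ} (hf : Continuous f) (hL : 0 < L) :
    (∫ x in 0..L, |f x|) ^ 2 ≤ L * ∫ x in 0..L, f x ^ 2 := by
  set I := ∫ x in 0..L, |f x|
  have habs : IntervalIntegrable (fun x => 2 * L * I * |f x|) volume 0 L :=
    (continuous_const.mul hf.abs).intervalIntegrable _ _
  have hsq : IntervalIntegrable (fun x => L ^ 2 * f x ^ 2) volume 0 L :=
    (continuous_const.mul (hf.pow 2)).intervalIntegrable _ _
  have hvar : 0 ≤ L * (L * ∫ x in 0..L, f x ^ 2) - L * I ^ 2 :=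
    calc
      0 ≤ ∫ x in 0..L, (L * |f x| - I) ^ 2 :=
        intervalIntegral.integral_nonneg hL.le fun x _ => sq_nonneg _
      _ = ∫ x in 0..L, (L ^ 2 * f x ^ 2 - 2 * L * I * |f x| + I ^ 2) := by
        simp only [sub_sq, mul_pow, sq_abs]
        congr! 3
        ring
      _ = L * (L * ∫ x in 0..L, f x ^ 2) - L * I ^ 2 := by
        rw [intervalIntegral.integral_add (hsq.sub habs) intervalIntegrable_const,
          intervalIntegral.integral_sub hsq habs, intervalIntegral.integral_const_mul,
          intervalIntegral.integral_const_mul, intervalIntegral.integral_const, smul_eq_mul]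
        ring
  exact le_of_mul_le_mul_left (sub_nonneg.mp hvar) hL

lemma exists_tendsto_atTop_of_hasDerivAt_nonpos {f f' : ℝ → ℝ} {a b : ℝ}
    (hf : ∀ t, a < t → HasDerivAt f (f' t) t) (hf' : ∀ t, a < t → f' t ≤ 0)
    (hb : ∀ t, a < t → b ≤ f t) : ∃ l, Tendsto f atTop (𝓝 l) := by
  have hanti : AntitoneOn f (Ioi a) :=
    antitoneOn_of_hasDerivWithinAt_nonpos (convex_Ioi a)
      (fun t ht => (hf t ht).continuousAt.continuousWithinAt)
      (fun t ht => (hf t (interior_subset ht)).hasDerivWithinAt)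
      fun t ht => hf' t (interior_subset ht)
  have hmem (t : ℝ) : a < max t (a + 1) := (lt_add_one a).trans_le (le_max_right _ _)
  have htrunc : Antitone fun t => f (max t (a + 1)) :=
    fun s t hst => hanti (hmem s) (hmem t) (max_le_max_right _ hst)
  refine ⟨_, (tendsto_atTop_ciInf htrunc ⟨b, ?_⟩).congr' ?_⟩
  · rintro _ ⟨t, rfl⟩
    exact hb _ (hmem t)
  · filter_upwards [eventually_ge_atTop (a + 1)] with t ht
    rw [max_eq_left ht]

/- Both `E` and `D + K * E` are nonincreasing and bounded below, hence convergent. So `D` has a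
limit, and this limit vanishes since the increments of `E` over unit intervals tend to `0`. -/
lemma tendsto_zero_of_hasDerivAt_neg_of_deriv_le {E D D' : ℝ → ℝ} {K a : ℝ} (hK : 0 ≤ K)
    (hE : ∀ t, a < t → HasDerivAt E (-D t) t) (hD : ∀ t, a < t → HasDerivAt D (D' t) t)
    (hE0 : ∀ t, a < t → 0 ≤ E t) (hD0 : ∀ t, a < t → 0 ≤ D t)
    (hDK : ∀ t, a < t → D' t ≤ K * D t) : Tendsto D atTop (𝓝 0) := by
  obtain ⟨l, hl⟩ := exists_tendsto_atTop_of_hasDerivAt_nonpos hE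
    (fun t ht => neg_nonpos.2 (hD0 t ht)) hE0
  obtain ⟨k, hk⟩ := exists_tendsto_atTop_of_hasDerivAt_nonpos
    (fun t ht => (hD t ht).add ((hE t ht).const_mul K)) (b := 0)
    (fun t ht => by linarith [hDK t ht])
    fun t ht => add_nonneg (hD0 t ht) (mul_nonneg hK (hE0 t ht))
  have hDlim : Tendsto D atTop (𝓝 (k - K * l)) := by
    simpa using hk.sub (hl.const_mul K)
  have hmean (t : ℝ) : ∃ s, t ≤ s ∧ (a < t → D s = E t - E (t + 1)) := by
    by_cases ht : a < t
    · obtain ⟨s, hs, hslope⟩ := exists_hasDerivAt_eq_slope E (fun r => -D r) (lt_add_one t)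
        (fun r hr => (hE r (ht.trans_le hr.1)).continuousAt.continuousWithinAt)
        fun r hr => hE r (ht.trans hr.1)
      rw [add_sub_cancel_left, div_one] at hslope
      exact ⟨s, hs.1.le, fun _ => by linarith⟩
    · exact ⟨t, le_rfl, fun h => absurd h ht⟩
  choose s hts hDs using hmean
  have hincr : Tendsto (fun t => E t - E (t + 1)) atTop (𝓝 0) := by
    simpa using hl.sub (hl.comp (tendsto_atTop_add_const_right atTop 1 tendsto_id))
  have hDs_lim : Tendsto (D ∘ s) atTop (𝓝 0) := hincr.congr' <| by
    filter_upwards [eventually_gt_atTop a] with t ht using (hDs t ht).symm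
  rwa [tendsto_nhds_unique (hDlim.comp (tendsto_atTop_mono hts tendsto_id)) hDs_lim] at hDlim

end Calculus

section Profile

variable {ν L : ℝ} {u : ℝ → ℝ}

/-- The chemical potential `u³ - u - ν u''` of a slope profile `u`: the first variation of the
energy `∫ ν u'² / 2 + (u² - 1)² / 4`. -/
def chemicalPotential (ν : ℝ) (u : ℝ → ℝ) (x : ℝ) : ℝ :=
  u x ^ 3 - u x - ν * deriv (deriv u) x

lemma chemicalPotential_neg : chemicalPotential ν (-u) = -chemicalPotential ν u := by
  ext x
  simp only [chemicalPotential, deriv.neg', deriv.fun_neg', Pi.neg_apply]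
  ring

lemma periodic_chemicalPotential (hper : Function.Periodic u L) :
    Function.Periodic (chemicalPotential ν u) L := fun x => by
  simp only [chemicalPotential, hper x, periodic_deriv (periodic_deriv hper) x]

lemma contDiff_chemicalPotential (hu : ContDiff ℝ 3 u) :
    ContDiff ℝ 1 (chemicalPotential ν u) := by
  have hu' : ContDiff ℝ 2 (deriv u) := hu.deriv'
  have hu'' : ContDiff ℝ 1 (deriv (deriv u)) := hu'.deriv'
  have hu1 : ContDiff ℝ 1 u := hu.of_le (by norm_num)
  exact ((hu1.pow 3).sub hu1).sub (contDiff_const.mul hu'')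

/-- For constant `μ = chemicalPotential ν u`, this is the first integral of the profile equation
`ν u'' = u³ - u - μ`. The shift `a` only adds a constant in that case; for general `u` it makes the
derivative vanish where `u = a`. -/
def firstIntegral (ν : ℝ) (u : ℝ → ℝ) (a x : ℝ) : ℝ :=
  ν / 2 * deriv u x ^ 2 - (u x ^ 2 - 1) ^ 2 / 4 + chemicalPotential ν u x * (u x - a)

lemma hasDerivAt_firstIntegral (hu : ContDiff ℝ 3 u) (a x : ℝ) :
    HasDerivAt (firstIntegral ν u a)
      (deriv (chemicalPotential ν u) x * (u x - a)) x := by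
  have hu0 : HasDerivAt u (deriv u x) x := (hu.differentiable (by simp) x).hasDerivAt
  have hu1 : HasDerivAt (deriv u) (deriv (deriv u) x) x :=
    ((hu.of_le (by norm_num) : ContDiff ℝ 2 u).differentiable_deriv_two x).hasDerivAt
  have hμ : HasDerivAt (chemicalPotential ν u) (deriv (chemicalPotential ν u) x) x :=
    ((contDiff_chemicalPotential hu).differentiable (by simp) x).hasDerivAt
  convert! (((hu1.pow 2).const_mul (ν / 2)).sub
    ((((hu0.pow 2).sub_const 1).pow 2).div_const 4)).add (hμ.mul (hu0.sub_const a)) using 1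
  simp only [chemicalPotential, Pi.pow_apply]
  push_cast
  ring

lemma abs_integral_deriv_chemicalPotential_mul_le (hu : ContDiff ℝ 3 u)
    (hper : Function.Periodic u L) {a b x y : ℝ} (hxy : x ≤ y) (hyL : y ≤ x + L)
    (ha : ∀ z, a ≤ u z) (hb : ∀ z, u z ≤ b) :
    |∫ z in x..y, deriv (chemicalPotential ν u) z * (u z - a)| ≤
      (b - a) * ∫ z in 0..L, |deriv (chemicalPotential ν u) z| := by
  have hμ' : Continuous (deriv (chemicalPotential ν u)) :=
    (contDiff_chemicalPotential hu).continuous_deriv le_rfl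
  have hab : 0 ≤ b - a := sub_nonneg.2 ((ha 0).trans (hb 0))
  calc
    _ ≤ ∫ z in x..y, |deriv (chemicalPotential ν u) z * (u z - a)| :=
      intervalIntegral.abs_integral_le_integral_abs hxy
    _ ≤ ∫ z in x..y, (b - a) * |deriv (chemicalPotential ν u) z| := by
      refine intervalIntegral.integral_mono_on hxy ?_ ?_ fun z _ => ?_
      · exact (hμ'.mul (hu.continuous.sub continuous_const)).abs.intervalIntegrable _ _
      · exact (continuous_const.mul hμ'.abs).intervalIntegrable _ _
      · rw [abs_mul, mul_comm, abs_of_nonneg (sub_nonneg.2 (ha z))]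
        gcongr
        exact hb z
    _ = (b - a) * ∫ z in x..y, |deriv (chemicalPotential ν u) z| :=
      intervalIntegral.integral_const_mul _ _
    _ ≤ (b - a) * ∫ z in x..(x + L), |deriv (chemicalPotential ν u) z| := by
      gcongr
      exact intervalIntegral.integral_mono_interval le_rfl hxy hyL
        (ae_of_all _ fun z => abs_nonneg _) (hμ'.abs.intervalIntegrable _ _)
    _ = (b - a) * ∫ z in 0..L, |deriv (chemicalPotential ν u) z| := by
      have hperμ : Function.Periodic (fun z => |deriv (chemicalPotential ν u) z|) L :=
        (periodic_deriv (periodic_chemicalPotential hper)).comp abs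
      rw [hperμ.intervalIntegral_add_eq x 0, zero_add]

lemma sq_sub_one_le_of_firstIntegral_le {a b c I : ℝ} (ha : a ≤ 0) (hb : 1 < b)
    (hc : b ^ 3 - b ≤ c) (hI : 0 ≤ I)
    (hle : c * (b - a) - (b ^ 2 - 1) ^ 2 / 4 + (a ^ 2 - 1) ^ 2 / 4 ≤ (b - a) * I) :
    b ^ 2 - 1 ≤ I := by
  have hwell : (b ^ 2 - 1) ^ 2 / 4 ≤ (b - 1) * c :=
    calc
      (b ^ 2 - 1) ^ 2 / 4 = (b - 1) * ((b ^ 2 - 1) * ((b + 1) / 4)) := by ring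
      _ ≤ (b - 1) * ((b ^ 2 - 1) * b) := by
        gcongr
        · nlinarith
        · linarith
      _ = (b - 1) * (b ^ 3 - b) := by ring
      _ ≤ (b - 1) * c := by gcongr
  have hcI : (1 - a) * c ≤ (1 - a) * (b * I) :=
    calc
      (1 - a) * c ≤ (b - a) * I := by linarith [sq_nonneg (a ^ 2 - 1)]
      _ ≤ (1 - a) * b * I := by gcongr; nlinarith
      _ = (1 - a) * (b * I) := by ring
  have hbI : b * (b ^ 2 - 1) ≤ b * I :=
    calc
      b * (b ^ 2 - 1) = b ^ 3 - b := by ring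
      _ ≤ c := hc
      _ ≤ b * I := le_of_mul_le_mul_left hcI (by linarith)
  exact le_of_mul_le_mul_left hbI (by linarith)

lemma exists_forall_le_and_forall_ge_mem_Icc (hper : Function.Periodic u L) (hL : 0 < L)
    (hu : Continuous u) :
    ∃ x y, y ∈ Icc x (x + L) ∧ (∀ z, u z ≤ u x) ∧ ∀ z, u y ≤ u z := by
  obtain ⟨x, hx⟩ := exists_forall_le_of_periodic hper hL.ne' hu
  obtain ⟨y, hy⟩ := exists_forall_le_of_periodic (hper.comp Neg.neg) hL.ne' hu.neg
  obtain ⟨y', hy', hyy'⟩ := hper.exists_mem_Ico hL y x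
  exact ⟨x, y', Ico_subset_Icc_self hy', hx, fun z => hyy' ▸ neg_le_neg_iff.1 (hy z)⟩

lemma sq_max_sub_one_le_integral_abs (hν : 0 ≤ ν) (hu : ContDiff ℝ 3 u)
    (hper : Function.Periodic u L) {x y : ℝ} (hxy : y ∈ Icc x (x + L)) (hx : ∀ z, u z ≤ u x)
    (hy : ∀ z, u y ≤ u z) (hy0 : u y ≤ 0) (hx1 : 1 < u x) :
    u x ^ 2 - 1 ≤ ∫ z in 0..L, |deriv (chemicalPotential ν u) z| := by
  have hmax : IsLocalMax u x := .of_forall hx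
  have hmin : IsLocalMin u y := .of_forall hy
  have hμx : u x ^ 3 - u x ≤ chemicalPotential ν u x := by
    have := mul_nonpos_of_nonneg_of_nonpos hν
      (deriv_deriv_nonpos_of_isLocalMax hmax hu.continuous.continuousAt)
    rw [chemicalPotential]
    linarith
  have hμ'int : IntervalIntegrable
      (fun z => deriv (chemicalPotential ν u) z * (u z - u y)) volume x y :=
    (((contDiff_chemicalPotential hu).continuous_deriv le_rfl).mul
      (hu.continuous.sub continuous_const)).intervalIntegrable _ _
  have hle := neg_le_of_abs_le
    (abs_integral_deriv_chemicalPotential_mul_le (ν := ν) hu hper hxy.1 hxy.2 hy hx)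
  rw [intervalIntegral.integral_eq_sub_of_hasDerivAt
    (fun z _ => hasDerivAt_firstIntegral hu (u y) z) hμ'int,
    firstIntegral, firstIntegral, hmax.deriv_eq_zero, hmin.deriv_eq_zero] at hle
  refine sq_sub_one_le_of_firstIntegral_le hy0 hx1 hμx ?_ (by linarith)
  exact intervalIntegral.integral_nonneg (by linarith [hxy.1, hxy.2]) fun _ _ => abs_nonneg _

lemma sq_le_one_add_integral_abs_of_nonneg (hν : 0 ≤ ν) (hL : 0 < L) (hu : ContDiff ℝ 3 u)
    (hper : Function.Periodic u L) {z x : ℝ} (hz : u z = 0) (hx : 0 ≤ u x) :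
    u x ^ 2 ≤ 1 + ∫ y in 0..L, |deriv (chemicalPotential ν u) y| := by
  have hI : 0 ≤ ∫ y in 0..L, |deriv (chemicalPotential ν u) y| :=
    intervalIntegral.integral_nonneg hL.le fun _ _ => abs_nonneg _
  obtain ⟨b, a, hab, hb, ha⟩ := exists_forall_le_and_forall_ge_mem_Icc hper hL hu.continuous
  have hxb : u x ^ 2 ≤ u b ^ 2 := by gcongr; exact hb x
  rcases le_or_gt (u b) 1 with hb1 | hb1
  · have : u b ^ 2 ≤ 1 := pow_le_one₀ (hx.trans (hb x)) hb1
    linarith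
  · linarith [sq_max_sub_one_le_integral_abs hν hu hper hab hb ha (hz ▸ ha z) hb1]

theorem sq_le_one_add_integral_abs_deriv_chemicalPotential (hν : 0 ≤ ν) (hL : 0 < L)
    (hu : ContDiff ℝ 3 u) (hper : Function.Periodic u L) {z : ℝ} (hz : u z = 0) (x : ℝ) :
    u x ^ 2 ≤ 1 + ∫ y in 0..L, |deriv (chemicalPotential ν u) y| := by
  rcases le_total 0 (u x) with hx | hx
  · exact sq_le_one_add_integral_abs_of_nonneg hν hL hu hper hz hx
  · have hneg := sq_le_one_add_integral_abs_of_nonneg (ν := ν) (u := -u) (z := z) (x := x) hν hL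
      hu.neg (hper.comp Neg.neg) (by simp [hz]) (by simpa using hx)
    simpa [chemicalPotential_neg] using hneg

end Profile

/-- The partial derivative `∂F/∂x` of a function `F t x` of time and space. -/
def spaceDeriv (F : ℝ → ℝ → ℝ) (t x : ℝ) : ℝ := deriv (F t) x

/-- The partial derivative `∂F/∂t` of a function `F t x` of time and space. -/
def timeDeriv (F : ℝ → ℝ → ℝ) (t x : ℝ) : ℝ := deriv (fun s => F s x) t

local notation "∂ₓ" => spaceDeriv
local notation "∂ₜ" => timeDeriv

/-- A function of time and space that is smooth for `t > 0` and `L`-periodic in space; nothing is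
required at times `t ≤ 0`. -/
structure IsPeriodicFlow (L : ℝ) (F : ℝ → ℝ → ℝ) : Prop where
  contDiffOn : ContDiffOn ℝ ∞ (Function.uncurry F) (Ioi 0 ×ˢ univ)
  periodic : ∀ t, 0 < t → Function.Periodic (F t) L

lemma spaceDeriv_congr {F G : ℝ → ℝ → ℝ} {t : ℝ} (h : F t = G t) : ∂ₓ F t = ∂ₓ G t :=
  congrArg deriv h

namespace IsPeriodicFlow

variable {L : ℝ} {F G : ℝ → ℝ → ℝ} {t : ℝ}

lemma const (c : ℝ) : IsPeriodicFlow L fun _ _ => c :=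
  ⟨contDiffOn_const, fun _ _ _ => rfl⟩

lemma add (hF : IsPeriodicFlow L F) (hG : IsPeriodicFlow L G) :
    IsPeriodicFlow L fun t x => F t x + G t x :=
  ⟨hF.contDiffOn.add hG.contDiffOn, fun t ht => (hF.periodic t ht).add (hG.periodic t ht)⟩

lemma sub (hF : IsPeriodicFlow L F) (hG : IsPeriodicFlow L G) :
    IsPeriodicFlow L fun t x => F t x - G t x :=
  ⟨hF.contDiffOn.sub hG.contDiffOn, fun t ht => (hF.periodic t ht).sub (hG.periodic t ht)⟩

lemma mul (hF : IsPeriodicFlow L F) (hG : IsPeriodicFlow L G) :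
    IsPeriodicFlow L fun t x => F t x * G t x :=
  ⟨hF.contDiffOn.mul hG.contDiffOn, fun t ht => (hF.periodic t ht).mul (hG.periodic t ht)⟩

lemma pow (hF : IsPeriodicFlow L F) (n : ℕ) : IsPeriodicFlow L fun t x => F t x ^ n :=
  ⟨hF.contDiffOn.pow n, fun t ht => (hF.periodic t ht).comp (· ^ n)⟩

lemma contDiffAt (hF : IsPeriodicFlow L F) (ht : 0 < t) (x : ℝ) :
    ContDiffAt ℝ ∞ (Function.uncurry F) (t, x) :=
  hF.contDiffOn.contDiffAt ((isOpen_Ioi.prod isOpen_univ).mem_nhds ⟨ht, mem_univ x⟩)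

lemma contDiff_space (hF : IsPeriodicFlow L F) (ht : 0 < t) : ContDiff ℝ ∞ (F t) :=
  contDiff_iff_contDiffAt.2 fun x =>
    (hF.contDiffAt ht x).comp x (contDiff_prodMk_right t).contDiffAt

lemma intervalIntegrable (hF : IsPeriodicFlow L F) (ht : 0 < t) (a b : ℝ) :
    IntervalIntegrable (F t) volume a b :=
  (hF.contDiff_space ht).continuous.intervalIntegrable a b

lemma hasDerivAt_space (hF : IsPeriodicFlow L F) (ht : 0 < t) (x : ℝ) :
    HasDerivAt (F t) (∂ₓ F t x) x :=
  ((hF.contDiff_space ht).differentiable (by simp) x).hasDerivAt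

lemma hasDerivAt_time (hF : IsPeriodicFlow L F) (ht : 0 < t) (x : ℝ) :
    HasDerivAt (fun s => F s x) (∂ₜ F t x) t := by
  have hsmooth : ContDiffAt ℝ ∞ (fun s => F s x) t :=
    (hF.contDiffAt ht x).comp t (contDiff_prodMk_left x).contDiffAt
  exact (hsmooth.differentiableAt (by simp)).hasDerivAt

lemma spaceDeriv_eq_fderiv (hF : IsPeriodicFlow L F) (ht : 0 < t) (x : ℝ) :
    ∂ₓ F t x = fderiv ℝ (Function.uncurry F) (t, x) (0, 1) := by
  have hF' := ((hF.contDiffAt ht x).differentiableAt (by simp)).hasFDerivAt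
  exact (hF'.comp_hasDerivAt x ((hasDerivAt_const x t).prodMk (hasDerivAt_id x))).deriv

lemma timeDeriv_eq_fderiv (hF : IsPeriodicFlow L F) (ht : 0 < t) (x : ℝ) :
    ∂ₜ F t x = fderiv ℝ (Function.uncurry F) (t, x) (1, 0) := by
  have hF' := ((hF.contDiffAt ht x).differentiableAt (by simp)).hasFDerivAt
  exact (hF'.comp_hasDerivAt t ((hasDerivAt_id t).prodMk (hasDerivAt_const t x))).deriv

lemma contDiffOn_fderiv (hF : IsPeriodicFlow L F) :
    ContDiffOn ℝ ∞ (fderiv ℝ (Function.uncurry F)) (Ioi 0 ×ˢ univ) :=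
  hF.contDiffOn.fderiv_of_isOpen (isOpen_Ioi.prod isOpen_univ) (by simp)

lemma spaceDeriv (hF : IsPeriodicFlow L F) : IsPeriodicFlow L (∂ₓ F) where
  contDiffOn := (hF.contDiffOn_fderiv.clm_apply contDiffOn_const).congr
    fun p hp => hF.spaceDeriv_eq_fderiv hp.1 p.2
  periodic t ht := periodic_deriv (hF.periodic t ht)

lemma timeDeriv (hF : IsPeriodicFlow L F) : IsPeriodicFlow L (∂ₜ F) where
  contDiffOn := (hF.contDiffOn_fderiv.clm_apply contDiffOn_const).congr
    fun p hp => hF.timeDeriv_eq_fderiv hp.1 p.2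
  periodic t ht x := EventuallyEq.deriv_eq <| by
    filter_upwards [Ioi_mem_nhds ht] with s hs using hF.periodic s hs x

lemma iterate_spaceDeriv (hF : IsPeriodicFlow L F) (n : ℕ) : IsPeriodicFlow L (∂ₓ^[n] F) := by
  induction n with
  | zero => exact hF
  | succ n ih => exact Function.iterate_succ_apply' ∂ₓ n F ▸ ih.spaceDeriv

lemma fderiv_eq_fderiv_fderiv (hF : IsPeriodicFlow L F) (ht : 0 < t) (x : ℝ) {v w : ℝ × ℝ}
    (hG : ∀ s, 0 < s → ∀ y, G s y = fderiv ℝ (Function.uncurry F) (s, y) w) :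
    fderiv ℝ (Function.uncurry G) (t, x) v =
      fderiv ℝ (fderiv ℝ (Function.uncurry F)) (t, x) v w := by
  have hnhds : Ioi (0 : ℝ) ×ˢ (univ : Set ℝ) ∈ 𝓝 (t, x) :=
    (isOpen_Ioi.prod isOpen_univ).mem_nhds ⟨ht, mem_univ x⟩
  have hG' : Function.uncurry G =ᶠ[𝓝 (t, x)] fun p => fderiv ℝ (Function.uncurry F) p w := by
    filter_upwards [hnhds] with p hp using hG p.1 hp.1 p.2
  have hF'' := (hF.contDiffOn_fderiv.contDiffAt hnhds).differentiableAt (by simp)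
  rw [hG'.fderiv_eq, fderiv_clm_apply hF'' (differentiableAt_const w)]
  simp

lemma timeDeriv_spaceDeriv (hF : IsPeriodicFlow L F) (ht : 0 < t) :
    ∂ₜ (∂ₓ F) t = ∂ₓ (∂ₜ F) t := by
  ext x
  rw [hF.spaceDeriv.timeDeriv_eq_fderiv ht, hF.timeDeriv.spaceDeriv_eq_fderiv ht,
    hF.fderiv_eq_fderiv_fderiv ht x fun s hs y => hF.spaceDeriv_eq_fderiv hs y,
    hF.fderiv_eq_fderiv_fderiv ht x fun s hs y => hF.timeDeriv_eq_fderiv hs y]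
  have hC2 : ContDiffAt ℝ 2 (Function.uncurry F) (t, x) :=
    contDiffAt_infty.1 (hF.contDiffAt ht x) 2
  exact (hC2.isSymmSndFDerivAt (by simp)).eq _ _

lemma timeDeriv_iterate_spaceDeriv (hF : IsPeriodicFlow L F) (ht : 0 < t) (n : ℕ) :
    ∂ₜ (∂ₓ^[n] F) t = ∂ₓ^[n] (∂ₜ F) t := by
  induction n with
  | zero => rfl
  | succ n ih =>
    rw [Function.iterate_succ_apply', Function.iterate_succ_apply',
      (hF.iterate_spaceDeriv n).timeDeriv_spaceDeriv ht, spaceDeriv_congr ih]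

lemma hasDerivAt_iterate_spaceDeriv (hF : IsPeriodicFlow L F) (ht : 0 < t) (n : ℕ) (x : ℝ) :
    HasDerivAt (fun s => ∂ₓ^[n] F s x) (∂ₓ^[n] (∂ₜ F) t x) t :=
  hF.timeDeriv_iterate_spaceDeriv ht n ▸ (hF.iterate_spaceDeriv n).hasDerivAt_time ht x

lemma integral_mul_spaceDeriv (hF : IsPeriodicFlow L F) (hG : IsPeriodicFlow L G) (ht : 0 < t) :
    ∫ x in 0..L, F t x * ∂ₓ G t x = -∫ x in 0..L, ∂ₓ F t x * G t x := by
  rw [intervalIntegral.integral_mul_deriv_eq_deriv_mul (fun x _ => hF.hasDerivAt_space ht x)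
    (fun x _ => hG.hasDerivAt_space ht x) (hF.spaceDeriv.intervalIntegrable ht _ _)
    (hG.spaceDeriv.intervalIntegrable ht _ _), (hF.periodic t ht).eq, (hG.periodic t ht).eq]
  ring

lemma hasDerivAt_integral (hF : IsPeriodicFlow L F) (ht : 0 < t) (a b : ℝ) :
    HasDerivAt (fun s => ∫ x in a..b, F s x) (∫ x in a..b, ∂ₜ F t x) t := by
  have hcont : ContinuousOn (Function.uncurry (∂ₜ F)) (Icc (t / 2) (2 * t) ×ˢ uIcc a b) :=
    hF.timeDeriv.contDiffOn.continuousOn.mono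
      fun p hp => ⟨(half_pos ht).trans_le hp.1.1, mem_univ _⟩
  obtain ⟨C, hC⟩ := (isCompact_Icc.prod isCompact_uIcc).exists_bound_of_continuousOn hcont
  refine (intervalIntegral.hasDerivAt_integral_of_dominated_loc_of_deriv_le
    (bound := fun _ => C) (s := Ioo (t / 2) (2 * t)) (Ioo_mem_nhds (by linarith) (by linarith)) ?_
    (hF.intervalIntegrable ht a b) ?_ ?_ intervalIntegrable_const ?_).2
  · filter_upwards [Ioi_mem_nhds ht] with s hs
    exact (hF.contDiff_space hs).continuous.aestronglyMeasurable
  · exact (hF.timeDeriv.contDiff_space ht).continuous.aestronglyMeasurable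
  · exact ae_of_all _ fun x hx s hs =>
      hC (s, x) ⟨Ioo_subset_Icc_self hs, uIoc_subset_uIcc hx⟩
  · exact ae_of_all _ fun x _ s hs => hF.hasDerivAt_time ((half_pos ht).trans hs.1) x

lemma integral_spaceDeriv_sq_le (hF : IsPeriodicFlow L F) (hL : 0 ≤ L) (ht : 0 < t) {ν : ℝ}
    (hν : 0 < ν) :
    ∫ x in 0..L, ∂ₓ F t x ^ 2 ≤
      ν * (∫ x in 0..L, ∂ₓ (∂ₓ F) t x ^ 2) + 1 / (4 * ν) * ∫ x in 0..L, F t x ^ 2 := by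
  have hF_int := ((hF.pow 2).intervalIntegrable ht 0 L).const_mul (1 / (4 * ν))
  have hFxx_int := ((hF.spaceDeriv.spaceDeriv.pow 2).intervalIntegrable ht 0 L).const_mul ν
  calc
    ∫ x in 0..L, ∂ₓ F t x ^ 2 = ∫ x in 0..L, -(∂ₓ (∂ₓ F) t x * F t x) := by
      simp only [sq, hF.spaceDeriv.integral_mul_spaceDeriv hF ht, intervalIntegral.integral_neg]
    _ ≤ ∫ x in 0..L, (ν * ∂ₓ (∂ₓ F) t x ^ 2 + 1 / (4 * ν) * F t x ^ 2) := by
      refine intervalIntegral.integral_mono_on hL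
        ((hF.spaceDeriv.spaceDeriv.mul hF).intervalIntegrable ht 0 L).neg
        (hFxx_int.add hF_int) fun x _ => ?_
      have hyoung : 0 ≤ 1 / (4 * ν) * (2 * ν * ∂ₓ (∂ₓ F) t x + F t x) ^ 2 := by positivity
      have hexpand : 1 / (4 * ν) * (2 * ν * ∂ₓ (∂ₓ F) t x + F t x) ^ 2 =
          ν * ∂ₓ (∂ₓ F) t x ^ 2 + ∂ₓ (∂ₓ F) t x * F t x + 1 / (4 * ν) * F t x ^ 2 := by
        field_simp
        ring
      linarith
    _ = _ := by
      rw [intervalIntegral.integral_add hFxx_int hF_int, intervalIntegral.integral_const_mul,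
        intervalIntegral.integral_const_mul]

end IsPeriodicFlow

/-- A space-periodic classical solution, for `t > 0`, of the epitaxial growth equation with slope
selection, written in the conservation form `∂ₜ h = ∂ₓ μ` with `μ` the chemical potential of the
slope `∂ₓ h`. -/
structure IsSlopeSelectionFlow (ν L : ℝ) (h : ℝ → ℝ → ℝ) : Prop extends IsPeriodicFlow L h where
  timeDeriv_eq : ∀ t, 0 < t → ∂ₜ h t = deriv (chemicalPotential ν (∂ₓ h t))

/-- The energy of a height profile over one period, in terms of the slope `∂ₓ h`. -/
def slopeEnergy (ν L : ℝ) (h : ℝ → ℝ → ℝ) (t : ℝ) : ℝ :=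
  ∫ x in 0..L, (ν / 2 * ∂ₓ (∂ₓ h) t x ^ 2 + 1 / 4 * (∂ₓ h t x ^ 2 - 1) ^ 2)

/-- The rate `∫ (∂ₜ h)²` at which `slopeEnergy` decays along a solution. -/
def dissipation (L : ℝ) (h : ℝ → ℝ → ℝ) (t : ℝ) : ℝ :=
  ∫ x in 0..L, ∂ₜ h t x ^ 2

lemma slopeEnergy_nonneg {ν L : ℝ} (hν : 0 ≤ ν) (hL : 0 ≤ L) (h : ℝ → ℝ → ℝ) (t : ℝ) :
    0 ≤ slopeEnergy ν L h t :=
  intervalIntegral.integral_nonneg hL fun _ _ => by positivity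

lemma dissipation_nonneg {L : ℝ} (hL : 0 ≤ L) (h : ℝ → ℝ → ℝ) (t : ℝ) : 0 ≤ dissipation L h t :=
  intervalIntegral.integral_nonneg hL fun _ _ => sq_nonneg _

namespace IsSlopeSelectionFlow

variable {ν L : ℝ} {h : ℝ → ℝ → ℝ} {t : ℝ}

lemma isPeriodicFlow_chemicalPotential (hh : IsSlopeSelectionFlow ν L h) :
    IsPeriodicFlow L fun t => chemicalPotential ν (∂ₓ h t) :=
  have hu := hh.spaceDeriv
  ((hu.pow 3).sub hu).sub ((IsPeriodicFlow.const ν).mul hu.spaceDeriv.spaceDeriv)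

lemma timeDeriv_energyDensity (hh : IsSlopeSelectionFlow ν L h) (ht : 0 < t) (x : ℝ) :
    ∂ₜ (fun s y => ν / 2 * ∂ₓ (∂ₓ h) s y ^ 2 + 1 / 4 * (∂ₓ h s y ^ 2 - 1) ^ 2) t x =
      ν * (∂ₓ (∂ₓ h) t x * ∂ₓ (∂ₓ (∂ₜ h)) t x) +
        (∂ₓ h t x ^ 3 - ∂ₓ h t x) * ∂ₓ (∂ₜ h) t x := by
  have hu : HasDerivAt (fun s => ∂ₓ h s x) (∂ₓ (∂ₜ h) t x) t :=
    hh.hasDerivAt_iterate_spaceDeriv ht 1 x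
  have hux : HasDerivAt (fun s => ∂ₓ (∂ₓ h) s x) (∂ₓ (∂ₓ (∂ₜ h)) t x) t :=
    hh.hasDerivAt_iterate_spaceDeriv ht 2 x
  refine (((hux.fun_pow 2).const_mul (ν / 2)).add
    ((((hu.fun_pow 2).sub_const 1).fun_pow 2).const_mul (1 / 4))).deriv.trans ?_
  push_cast
  ring

theorem hasDerivAt_slopeEnergy (hh : IsSlopeSelectionFlow ν L h) (ht : 0 < t) :
    HasDerivAt (slopeEnergy ν L h) (-dissipation L h t) t := by
  have hu := hh.spaceDeriv
  have hgx := hh.timeDeriv.spaceDeriv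
  have hdensity : IsPeriodicFlow L
      fun s y => ν / 2 * ∂ₓ (∂ₓ h) s y ^ 2 + 1 / 4 * (∂ₓ h s y ^ 2 - 1) ^ 2 :=
    ((IsPeriodicFlow.const _).mul (hu.spaceDeriv.pow 2)).add
      ((IsPeriodicFlow.const _).mul (((hu.pow 2).sub (.const 1)).pow 2))
  have hwell := (((hu.pow 3).sub hu).mul hgx).intervalIntegrable ht 0 L
  convert! hdensity.hasDerivAt_integral ht 0 L using 1
  symm
  calc
    _ = ν * (∫ x in 0..L, ∂ₓ (∂ₓ h) t x * ∂ₓ (∂ₓ (∂ₜ h)) t x) +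
        ∫ x in 0..L, (∂ₓ h t x ^ 3 - ∂ₓ h t x) * ∂ₓ (∂ₜ h) t x := by
      simp only [hh.timeDeriv_energyDensity ht]
      rw [intervalIntegral.integral_add
        (((hu.spaceDeriv.mul hgx.spaceDeriv).intervalIntegrable ht 0 L).const_mul ν) hwell,
        intervalIntegral.integral_const_mul]
    _ = ∫ x in 0..L, chemicalPotential ν (∂ₓ h t) x * ∂ₓ (∂ₜ h) t x := by
      rw [hu.spaceDeriv.integral_mul_spaceDeriv hgx ht, mul_neg, neg_add_eq_sub,
        ← intervalIntegral.integral_const_mul, ← intervalIntegral.integral_sub hwell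
          (((hu.spaceDeriv.spaceDeriv.mul hgx).intervalIntegrable ht 0 L).const_mul ν)]
      refine intervalIntegral.integral_congr fun x _ => ?_
      change _ = (∂ₓ h t x ^ 3 - ∂ₓ h t x - ν * ∂ₓ (∂ₓ (∂ₓ h)) t x) * ∂ₓ (∂ₜ h) t x
      ring
    _ = -dissipation L h t := by
      rw [hh.isPeriodicFlow_chemicalPotential.integral_mul_spaceDeriv hh.timeDeriv ht]
      simp only [dissipation, sq, hh.timeDeriv_eq t ht, spaceDeriv]

lemma timeDeriv_chemicalPotential (hh : IsSlopeSelectionFlow ν L h) (ht : 0 < t) (x : ℝ) :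
    ∂ₜ (fun s => chemicalPotential ν (∂ₓ h s)) t x =
      (3 * ∂ₓ h t x ^ 2 - 1) * ∂ₓ (∂ₜ h) t x - ν * ∂ₓ (∂ₓ (∂ₓ (∂ₜ h))) t x := by
  have hu : HasDerivAt (fun s => ∂ₓ h s x) (∂ₓ (∂ₜ h) t x) t :=
    hh.hasDerivAt_iterate_spaceDeriv ht 1 x
  have huxx : HasDerivAt (fun s => ∂ₓ (∂ₓ (∂ₓ h)) s x) (∂ₓ (∂ₓ (∂ₓ (∂ₜ h))) t x) t :=
    hh.hasDerivAt_iterate_spaceDeriv ht 3 x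
  refine (((hu.fun_pow 3).sub hu).sub (huxx.const_mul ν)).deriv.trans ?_
  push_cast
  ring

lemma timeDeriv_timeDeriv (hh : IsSlopeSelectionFlow ν L h) (ht : 0 < t) (x : ℝ) :
    ∂ₜ (∂ₜ h) t x = ∂ₓ (∂ₜ fun s => chemicalPotential ν (∂ₓ h s)) t x := by
  rw [← hh.isPeriodicFlow_chemicalPotential.timeDeriv_spaceDeriv ht]
  refine EventuallyEq.deriv_eq ?_
  filter_upwards [Ioi_mem_nhds ht] with s hs using congrFun (hh.timeDeriv_eq s hs) x

lemma hasDerivAt_dissipation (hh : IsSlopeSelectionFlow ν L h) (ht : 0 < t) :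
    HasDerivAt (dissipation L h)
      (-(2 * ∫ x in 0..L, ∂ₓ (∂ₜ h) t x * ∂ₜ (fun s => chemicalPotential ν (∂ₓ h s)) t x)) t := by
  have hg := hh.timeDeriv
  have hdensity (x : ℝ) : ∂ₜ (fun s y => ∂ₜ h s y ^ 2) t x =
      2 * (∂ₜ h t x * ∂ₓ (∂ₜ fun s => chemicalPotential ν (∂ₓ h s)) t x) := by
    refine ((hg.hasDerivAt_time ht x).fun_pow 2).deriv.trans ?_
    rw [hh.timeDeriv_timeDeriv ht]
    push_cast
    ring
  convert! (hg.pow 2).hasDerivAt_integral ht 0 L using 1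
  simp only [hdensity, intervalIntegral.integral_const_mul,
    hg.integral_mul_spaceDeriv hh.isPeriodicFlow_chemicalPotential.timeDeriv ht, mul_neg]

lemma neg_integral_spaceDeriv_mul_timeDeriv_le (hh : IsSlopeSelectionFlow ν L h) (hν : 0 < ν)
    (hL : 0 ≤ L) (ht : 0 < t) :
    -(2 * ∫ x in 0..L, ∂ₓ (∂ₜ h) t x * ∂ₜ (fun s => chemicalPotential ν (∂ₓ h s)) t x) ≤
      1 / (2 * ν) * dissipation L h t := by
  have hgx := hh.timeDeriv.spaceDeriv
  have hsq := (hgx.pow 2).intervalIntegrable ht 0 L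
  have hdisp := ((hgx.mul hgx.spaceDeriv.spaceDeriv).intervalIntegrable ht 0 L).const_mul ν
  have hflux := (hgx.mul hh.isPeriodicFlow_chemicalPotential.timeDeriv).intervalIntegrable ht 0 L
  have hlower : ∫ x in 0..L, -(∂ₓ (∂ₜ h) t x * ∂ₜ (fun s => chemicalPotential ν (∂ₓ h s)) t x) ≤
      ∫ x in 0..L, (∂ₓ (∂ₜ h) t x ^ 2 + ν * (∂ₓ (∂ₜ h) t x * ∂ₓ (∂ₓ (∂ₓ (∂ₜ h))) t x)) := by
    refine intervalIntegral.integral_mono_on hL hflux.neg (hsq.add hdisp) fun x _ => ?_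
    rw [hh.timeDeriv_chemicalPotential ht]
    linarith [sq_nonneg (∂ₓ h t x * ∂ₓ (∂ₜ h) t x)]
  have hparts : ∫ x in 0..L, ∂ₓ (∂ₜ h) t x * ∂ₓ (∂ₓ (∂ₓ (∂ₜ h))) t x =
      -∫ x in 0..L, ∂ₓ (∂ₓ (∂ₜ h)) t x ^ 2 := by
    simp only [hgx.integral_mul_spaceDeriv hgx.spaceDeriv ht, sq]
  have hinterp := hh.timeDeriv.integral_spaceDeriv_sq_le hL ht hν
  rw [intervalIntegral.integral_neg, intervalIntegral.integral_add hsq hdisp,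
    intervalIntegral.integral_const_mul, hparts] at hlower
  have hhalf : 1 / (2 * ν) * dissipation L h t = 2 * (1 / (4 * ν) * dissipation L h t) := by
    ring
  rw [hhalf, dissipation]
  linarith

theorem tendsto_dissipation (hh : IsSlopeSelectionFlow ν L h) (hν : 0 < ν) (hL : 0 ≤ L) :
    Tendsto (dissipation L h) atTop (𝓝 0) :=
  tendsto_zero_of_hasDerivAt_neg_of_deriv_le (by positivity)
    (fun _ ht => hh.hasDerivAt_slopeEnergy ht) (fun _ ht => hh.hasDerivAt_dissipation ht)
    (fun _ _ => slopeEnergy_nonneg hν.le hL h _) (fun _ _ => dissipation_nonneg hL h _)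
    fun _ ht => hh.neg_integral_spaceDeriv_mul_timeDeriv_le hν hL ht

theorem tendsto_integral_abs_timeDeriv (hh : IsSlopeSelectionFlow ν L h) (hν : 0 < ν)
    (hL : 0 < L) : Tendsto (fun t => ∫ x in 0..L, |∂ₜ h t x|) atTop (𝓝 0) := by
  have hbound : Tendsto (fun t => √(L * dissipation L h t)) atTop (𝓝 0) := by
    simpa using ((hh.tendsto_dissipation hν hL.le).const_mul L).sqrt
  refine squeeze_zero' (.of_forall fun t => ?_) ?_ hbound
  · exact intervalIntegral.integral_nonneg hL.le fun _ _ => abs_nonneg _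
  · filter_upwards [eventually_gt_atTop 0] with t ht
    exact le_sqrt_of_sq_le (sq_integral_abs_le (hh.timeDeriv.contDiff_space ht).continuous hL)

theorem sq_slope_le (hh : IsSlopeSelectionFlow ν L h) (hν : 0 ≤ ν) (hL : 0 < L) (ht : 0 < t)
    (x : ℝ) : ∂ₓ h t x ^ 2 ≤ 1 + ∫ y in 0..L, |∂ₜ h t y| := by
  obtain ⟨z, hz⟩ := exists_deriv_eq_zero_of_periodic (hh.periodic t ht) hL
    (hh.contDiff_space ht).continuous
  rw [hh.timeDeriv_eq t ht]
  exact sq_le_one_add_integral_abs_deriv_chemicalPotential hν hL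
    (contDiff_infty.1 (hh.spaceDeriv.contDiff_space ht) 3) (hh.spaceDeriv.periodic t ht) hz x

end IsSlopeSelectionFlow

lemma isSlopeSelectionFlow_of_hasDerivAt {ν L : ℝ} {h : ℝ → ℝ → ℝ} (hh : IsPeriodicFlow L h)
    (hpde : ∀ x, ∀ t, 0 < t → HasDerivAt (fun s => h s x)
      (deriv (fun y => deriv (h t) y ^ 3 - deriv (h t) y) x - ν * iteratedDeriv 4 (h t) x) t) :
    IsSlopeSelectionFlow ν L h where
  toIsPeriodicFlow := hh
  timeDeriv_eq t ht := by
    ext x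
    have hu := hh.spaceDeriv.hasDerivAt_space ht x
    have huxxx : HasDerivAt (deriv (deriv (∂ₓ h t))) (iteratedDeriv 4 (h t) x) x := by
      simp only [iteratedDeriv_succ, iteratedDeriv_zero]
      exact hh.spaceDeriv.spaceDeriv.spaceDeriv.hasDerivAt_space ht x
    have hcubic := ((hu.fun_pow 3).sub hu).differentiableAt.hasDerivAt
    exact (hpde x t ht).deriv.trans (hcubic.sub (huxxx.const_mul ν)).deriv.symm

theorem stmt17_general {ν L : ℝ} (hν : 0 < ν) (hL : 0 < L) {h : ℝ → ℝ → ℝ}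
    (hsmooth : ContDiffOn ℝ ∞ (fun p : ℝ × ℝ => h p.1 p.2) (Ioi 0 ×ˢ univ))
    (hper : ∀ t, 0 < t → Function.Periodic (h t) L)
    (hpde : ∀ x, ∀ t, 0 < t → HasDerivAt (fun s => h s x)
      (deriv (fun y => deriv (h t) y ^ 3 - deriv (h t) y) x - ν * iteratedDeriv 4 (h t) x) t) :
    ∀ ε : ℝ, 0 < ε → ∃ T : ℝ, ∀ t : ℝ, T ≤ t → ∀ x : ℝ, |deriv (h t) x| ≤ 1 + ε := by
  intro ε hε
  have hh : IsSlopeSelectionFlow ν L h := isSlopeSelectionFlow_of_hasDerivAt ⟨hsmooth, hper⟩ hpde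
  have hsmall : ∀ᶠ t in atTop, ∫ y in 0..L, |∂ₜ h t y| < ε :=
    (hh.tendsto_integral_abs_timeDeriv hν hL).eventually_lt_const hε
  obtain ⟨T, hT⟩ := eventually_atTop.1 (hsmall.and (eventually_gt_atTop 0))
  refine ⟨T, fun t ht x => abs_le_of_sq_le_sq ?_ (by positivity)⟩
  calc
    deriv (h t) x ^ 2 ≤ 1 + ∫ y in 0..L, |∂ₜ h t y| := hh.sq_slope_le hν.le hL (hT t ht).2 x
    _ ≤ 1 + ε := by linarith [(hT t ht).1]
    _ ≤ (1 + ε) ^ 2 := by nlinarith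

/-- Proposition 5.3, Eq. (5.3): for a smooth `2π`-periodic solution of
`∂_t h = ∂_x((∂_x h)³ − ∂_x h) − ν∂_x⁴h` on `[0,∞) × 𝕋` that is even in `x` and has
mean-zero initial data, `limsup_{t→∞} ‖∂_x h(t,·)‖_∞ ≤ 1`; equivalently, for every
`ε > 0` there is `T` with `|∂_x h(t,x)| ≤ 1 + ε` for all `t ≥ T` and all `x`. -/
theorem stmt17 (ν : ℝ) (hν : 0 < ν) (h : ℝ → ℝ → ℝ)
    (hsmooth : ContDiffOn ℝ (⊤ : ℕ∞) (fun p : ℝ × ℝ => h p.1 p.2) (Ici 0 ×ˢ univ))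
    (hper : ∀ t ∈ Ici (0 : ℝ), Function.Periodic (h t) (2 * Real.pi))
    (heven : ∀ t ∈ Ici (0 : ℝ), ∀ x : ℝ, h t (-x) = h t x)
    (hmean : (∫ x in Icc (-Real.pi) Real.pi, h 0 x) = 0)
    (hpde : ∀ (x : ℝ), ∀ t ∈ Ici (0 : ℝ),
      HasDerivWithinAt (fun s => h s x)
        (deriv (fun y => (deriv (h t) y) ^ 3 - deriv (h t) y) x
          - ν * iteratedDeriv 4 (h t) x) (Ici 0) t) :
    ∀ ε : ℝ, 0 < ε → ∃ T : ℝ, ∀ t : ℝ, T ≤ t → ∀ x : ℝ, |deriv (h t) x| ≤ 1 + ε := by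
  exact stmt17_general hν two_pi_pos (hsmooth.mono (prod_mono_left Ioi_subset_Ici_self))
    (fun t ht => hper t ht.le) fun x t ht => (hpde x t ht.le).hasDerivAt (Ici_mem_nhds ht)
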